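/- Let $x_1,\dots,x_n$ be integers greater than $1$. For every real $\rho\geq 3$ and every $0<\epsilon<1$ there exist positive integers $r,k_1,\dots,k_n$ such that $r\geq\rho$ and, for all $i$, $r\leq x_i^{k_i}\leq (1+\epsilon)r$ and $k_i\leq \dfrac{2^{2n+1}\,\log^n(\max_j x_j)\,\log\rho}{\log(x_i)\,\log^n(1+\epsilon)}$. -/

import Mathlib

/-!
A power `x i ^ k i` lies near `r` when `k i * log (x i)` lies near `log r`, so positive multiples of
the numbers `log (x i)` have to be brought within `log (1 + ε)` of each other. Put
`T = log ρ + log (1 + ε) / 2` and apply Dirichlet's simultaneous approximation theorem to the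
ratios `T / log (x i)`: for some `q ≥ 1`, every `log (x i)` has a multiple `k i * log (x i)` within
`log (1 + ε) / 2` of `q * T`. The shift by `log (1 + ε) / 2` in `T` keeps all these multiples above
`log ρ`, and `r` is the least of the powers `x i ^ k i`. Dirichlet's theorem itself is a volume
argument in the torus: balls around sufficiently many multiples of a point cannot be disjoint.
-/

open Finset MeasureTheory Real

section Approximation

variable {ι : Type*} [Fintype ι]

theorem volume_unitAddCircle_pi_univ : volume (Set.univ : Set (ι → UnitAddCircle)) = 1 := by
  simp [volume_pi, Measure.pi_univ]

theorem volume_unitAddCircle_pi_closedBall (ξ : ι → UnitAddCircle) {η : ℝ} (hη : 0 ≤ η)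
    (hη1 : η ≤ 1) :
    volume (Metric.closedBall ξ (η / 2)) = ENNReal.ofReal (η ^ Fintype.card ι) := by
  rw [MeasureTheory.volume_pi_closedBall _ (by positivity)]
  simp only [AddCircle.volume_closedBall, mul_div_cancel₀ η two_ne_zero, min_eq_right hη1,
    prod_const, card_univ, ENNReal.ofReal_pow hη]

theorem exists_nat_abs_mul_sub_int_le {η : ℝ} (hη : 0 < η) (hη1 : η ≤ 1) (a : ι → ℝ) :
    ∃ q : ℕ, 0 < q ∧ (q : ℝ) ≤ η⁻¹ ^ Fintype.card ι ∧
      ∃ p : ι → ℤ, ∀ i, |q * a i - p i| ≤ η := by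
  set Q : ℝ := η⁻¹ ^ Fintype.card ι with hQ
  have hQ1 : 1 ≤ Q := one_le_pow₀ ((one_le_inv₀ hη).2 hη1)
  have hvol : volume (Set.univ : Set (ι → UnitAddCircle)) ≤
      (⌊Q⌋₊ + 1) • volume (Metric.closedBall (0 : ι → UnitAddCircle) (η / 2)) := by
    rw [volume_unitAddCircle_pi_univ, volume_unitAddCircle_pi_closedBall _ hη.le hη1,
      ← ENNReal.ofReal_nsmul, ENNReal.one_le_ofReal, nsmul_eq_mul, Nat.cast_succ]
    calc 1 = Q * η ^ Fintype.card ι := by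
          rw [hQ, ← mul_pow, inv_mul_cancel₀ hη.ne', one_pow]
      _ ≤ (⌊Q⌋₊ + 1) * η ^ Fintype.card ι := by
          gcongr
          exact (Nat.lt_floor_add_one Q).le
  obtain ⟨q, ⟨hq, hqQ⟩, hqη⟩ := NormedAddCommGroup.exists_norm_nsmul_le
    (fun i => (a i : UnitAddCircle)) (Nat.floor_pos.2 hQ1) η hvol
  refine ⟨q, hq, (Nat.le_floor_iff (by positivity)).1 hqQ, fun i => round (q * a i), fun i => ?_⟩
  calc |q * a i - round (q * a i)| = ‖q • (a i : UnitAddCircle)‖ := by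
        rw [← AddCircle.coe_nsmul, UnitAddCircle.norm_eq, nsmul_eq_mul]
    _ ≤ η := (norm_le_pi_norm (q • fun i => (a i : UnitAddCircle)) i).trans hqη

theorem exists_nat_abs_mul_sub_int_mul_le {L : ι → ℝ} {M η : ℝ} (hL : ∀ i, L i ≠ 0)
    (hLM : ∀ i, |L i| ≤ M) (hη : 0 < η) (hηM : η ≤ M) (T : ℝ) :
    ∃ q : ℕ, 0 < q ∧ (q : ℝ) ≤ (M / η) ^ Fintype.card ι ∧
      ∃ p : ι → ℤ, ∀ i, |q * T - p i * L i| ≤ η := by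
  have hM : 0 < M := hη.trans_le hηM
  obtain ⟨q, hq, hqM, p, hp⟩ :=
    exists_nat_abs_mul_sub_int_le (div_pos hη hM) ((div_le_one hM).2 hηM) fun i => T / L i
  refine ⟨q, hq, by rwa [inv_div] at hqM, p, fun i => ?_⟩
  calc |q * T - p i * L i| = |q * (T / L i) - p i| * |L i| := by
        rw [← abs_mul, sub_mul, mul_assoc, div_mul_cancel₀ _ (hL i)]
    _ ≤ η / M * M := by gcongr; exacts [hp i, hLM i]
    _ = η := div_mul_cancel₀ _ hM.ne'

theorem exists_pos_multiples_close {L : ι → ℝ} {M δ R : ℝ} (hL : ∀ i, 0 < L i)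
    (hLM : ∀ i, L i ≤ M) (hδ : 0 < δ) (hδM : δ ≤ 2 * M) (hδR : δ ≤ R) :
    ∃ k : ι → ℕ, (∀ i, 0 < k i) ∧ (∀ i, R ≤ k i * L i) ∧ (∀ i j, k i * L i ≤ k j * L j + δ) ∧
      ∀ i, k i * L i ≤ 2 * (2 * M / δ) ^ Fintype.card ι * R := by
  obtain ⟨q, hq, hqM, p, hp⟩ := exists_nat_abs_mul_sub_int_mul_le (fun i => (hL i).ne')
    (fun i => (abs_of_pos (hL i)).trans_le (hLM i)) (half_pos hδ) (by linarith) (R + δ / 2)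
  have hq1 : (1 : ℝ) ≤ q := mod_cast hq
  simp only [abs_le] at hp
  have hpR (i : ι) : R ≤ p i * L i := by nlinarith [hp i]
  have hp_pos (i : ι) : 0 < p i := by
    have : (0 : ℝ) < p i := pos_of_mul_pos_left (hδ.trans_le (hδR.trans (hpR i))) (hL i).le
    exact_mod_cast this
  lift p to ι → ℕ using fun i => (hp_pos i).le
  simp only [Int.cast_natCast, Int.natCast_pos] at hp hpR hp_pos
  refine ⟨p, hp_pos, hpR, fun i j => by linarith [hp i, hp j], fun i => ?_⟩
  calc p i * L i ≤ q * (R + δ / 2) + δ / 2 := by linarith [hp i]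
    _ ≤ 2 * q * R := by nlinarith
    _ ≤ 2 * (M / (δ / 2)) ^ Fintype.card ι * R := by gcongr; linarith
    _ = 2 * (2 * M / δ) ^ Fintype.card ι * R := by rw [div_div_eq_mul_div, mul_comm M]

theorem dirichlet_simultaneous_approx_powers_general [Nonempty ι] {x : ι → ℝ} {X ρ ε : ℝ}
    (hx : ∀ i, 1 < x i) (hxX : ∀ i, x i ≤ X) (hε : 0 < ε) (hεX : 1 + ε ≤ X ^ 2)
    (hερ : 1 + ε ≤ ρ) :
    ∃ (j : ι) (k : ι → ℕ), (∀ i, 0 < k i) ∧ ρ ≤ x j ^ k j ∧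
      ∀ i, x j ^ k j ≤ x i ^ k i ∧ x i ^ k i ≤ (1 + ε) * x j ^ k j ∧
        k i ≤ 2 ^ (Fintype.card ι + 1) * log X ^ Fintype.card ι * log ρ /
          (log (x i) * log (1 + ε) ^ Fintype.card ι) := by
  have hx_pos (i : ι) : 0 < x i := zero_lt_one.trans (hx i)
  have hlogx (i : ι) : 0 < log (x i) := log_pos (hx i)
  have hlogX : log (1 + ε) ≤ 2 * log X :=
    (log_le_log (by linarith) hεX).trans_eq (by simp)
  obtain ⟨k, hk, hρk, hclose, hbound⟩ := exists_pos_multiples_close hlogx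
    (fun i => log_le_log (hx_pos i) (hxX i)) (log_pos (by linarith)) hlogX
    (log_le_log (by linarith) hερ)
  simp only [← log_pow] at hρk hclose
  have hpow (i : ι) : 0 < x i ^ k i := pow_pos (hx_pos i) _
  obtain ⟨j, hj⟩ := Finite.exists_min fun i => x i ^ k i
  refine ⟨j, k, hk, (log_le_log_iff (by linarith) (hpow j)).1 (hρk j),
    fun i => ⟨hj i, ?_, ?_⟩⟩
  · rw [← log_le_log_iff (hpow i) (mul_pos (by linarith) (hpow j)),
      log_mul (by linarith) (hpow j).ne', add_comm]
    exact hclose i j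
  · rw [mul_comm (log (x i)), ← div_div, le_div_iff₀ (hlogx i)]
    calc k i * log (x i) ≤ 2 * (2 * log X / log (1 + ε)) ^ Fintype.card ι * log ρ := hbound i
      _ = 2 ^ (Fintype.card ι + 1) * log X ^ Fintype.card ι * log ρ /
            log (1 + ε) ^ Fintype.card ι := by
          rw [div_pow, mul_pow]
          ring

end Approximation

/-- **A consequence of Dirichlet's simultaneous approximation theorem.**
Let `x 1, …, x n` be integers greater than 1.  For every real `ρ ≥ 3` and every `0 < ε < 1`
there exist positive integers `r, k 1, …, k n` such that `r ≥ ρ` and, for all `i`,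
`r ≤ x i ^ k i ≤ (1+ε) r` and
`k i ≤ 2^(2n+1) log^n (max_j x j) log ρ / (log (x i) log^n (1+ε))`. -/
theorem dirichlet_simultaneous_approx_powers
    (n : ℕ) (x : Fin n → ℕ) (hx : ∀ i, 1 < x i)
    (ρ : ℝ) (hρ : 3 ≤ ρ) (ε : ℝ) (hε0 : 0 < ε) (hε1 : ε < 1) :
    ∃ (r : ℕ) (k : Fin n → ℕ), 0 < r ∧ (∀ i, 0 < k i) ∧ ρ ≤ r ∧
      ∀ i, (r : ℝ) ≤ (x i : ℝ) ^ (k i) ∧ (x i : ℝ) ^ (k i) ≤ (1 + ε) * r ∧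
        (k i : ℝ) ≤ 2 ^ (2 * n + 1) * (Real.log ((Finset.univ.sup x : ℕ) : ℝ)) ^ n * Real.log ρ /
          (Real.log (x i) * (Real.log (1 + ε)) ^ n) := by
  rcases isEmpty_or_nonempty (Fin n) with _ | hn
  · exact ⟨⌈ρ⌉₊, fun _ => 1, Nat.ceil_pos.2 (by linarith), isEmptyElim, Nat.le_ceil ρ, isEmptyElim⟩
  have hx_le (i : Fin n) : (x i : ℝ) ≤ (univ.sup x : ℕ) := mod_cast le_sup (mem_univ i)
  have htwo : (2 : ℝ) ≤ (univ.sup x : ℕ) := hn.elim fun i => le_trans (mod_cast hx i) (hx_le i)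
  obtain ⟨j, k, hk, hρk, hxk⟩ := dirichlet_simultaneous_approx_powers_general (ρ := ρ)
    (fun i => by exact_mod_cast hx i) hx_le hε0 (by nlinarith) (by linarith)
  rw [Fintype.card_fin] at hxk
  refine ⟨x j ^ k j, k, pow_pos (zero_lt_one.trans (hx j)) _, hk, mod_cast hρk, fun i =>
    ⟨mod_cast (hxk i).1, mod_cast (hxk i).2.1, (hxk i).2.2.trans ?_⟩⟩
  have hlogρ : 0 ≤ log ρ := log_nonneg (by linarith)
  have hlogε : 0 ≤ log (1 + ε) := log_nonneg (by linarith)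
  gcongr
  · norm_num
  · linarith
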